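/- arXiv:1410.6697 — 2 statements merged into one kernel-verified Lean document; each statement's English description precedes it below -/
import Mathlib

section
/- Let b ≥ 2 be an integer and A ∈ {1, 2, …, b−1}. Let (e_n)_{n≥1} and (f_n)_{n≥1} be strictly increasing sequences of positive integers with e₁ < f₁ < e₂ < f₂ < ⋯, with ω := liminf_{n→∞} e_{n+1}/f_n > 2, and with f_n − e_n = O(n) as n → ∞. Let I_n = {e_n, e_n+1, …, f_n} and I = ⋃_{n≥1} I_n, and let (a_n)_{n≥1} be a strictly increasing sequence of integers such that every a_n ∈ I and both (e_n)_{n≥1} and (f_n)_{n≥1} occur as subsequences of (a_n)_{n≥1}. Put ζ = Σ_{n≥1} A·b^{−a_n}, and for each n let m = m(n) be the index with f_n = a_m; define x_n := b^{f_n} and y_n := Σ_{j≤m} A·b^{f_n − a_j} = ⌊ζ·x_n⌋. Then for every ε > 0: (i) for all sufficiently large n, ‖ζ·x_n‖ = |ζ·x_n − y_n| < x_n^{−ω+1+ε}; and (ii) for every pair (x, y) ∈ ℕ × ℤ with x sufficiently large (depending on ε), the inequality |ζ·x − y| ≤ x^{−ω/(ω−1)−ε} implies that (x, y) is linearly dependent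 on some (x_n, y_n). -/
open Filter Set

/-- `distNearestInt x` is the distance from `x` to the nearest integer. -/
noncomputable def distNearestInt (x : ℝ) : ℝ := |x - (round x : ℤ)|

lemma tail_bound_aux (b A : ℕ) (hb : 2 ≤ b) (hAb : A < b)
    (a : ℕ → ℕ) (ha : StrictMono a) (k F E : ℕ) (hF : ∀ j, j < k → a j ≤ F) (hE : E ≤ a k)
    (ζ : ℝ) (hζ : ζ = ∑' n : ℕ, (A : ℝ) / (b : ℝ) ^ (a n))
    (Y : ℤ) (hY : Y = ∑ j ∈ Finset.range k, (A : ℤ) * (b : ℤ) ^ (F - a j)) :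
    |ζ * (b : ℝ) ^ F - (Y : ℝ)| ≤ b * (b : ℝ) ^ F / (b : ℝ) ^ E := by
  have hb2 : (2 : ℝ) ≤ b := by exact_mod_cast hb
  have hb0 : (0 : ℝ) < b := by linarith
  have hA : (A : ℝ) + 1 ≤ b := by exact_mod_cast hAb
  have hr0 : (0 : ℝ) ≤ (b : ℝ)⁻¹ := by positivity
  have hr1 : (b : ℝ)⁻¹ < 1 := inv_lt_one_of_one_lt₀ (by linarith)
  have hak : ∀ j, a k + j ≤ a (j + k) := by
    intro j
    induction j with
    | zero => simp
    | succ j ih =>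
      have : a (j + k) < a (j + 1 + k) := ha (by omega)
      omega
  have hg : HasSum (fun j : ℕ => (A : ℝ) / (b : ℝ) ^ E * ((b : ℝ)⁻¹) ^ j)
      ((A : ℝ) / (b : ℝ) ^ E * (1 - (b : ℝ)⁻¹)⁻¹) :=
    (hasSum_geometric_of_lt_one hr0 hr1).mul_left _
  have hle : ∀ j, (A : ℝ) / (b : ℝ) ^ (a (j + k)) ≤ (A : ℝ) / (b : ℝ) ^ E * ((b : ℝ)⁻¹) ^ j := by
    intro j
    have h1 : (b : ℝ) ^ (E + j) ≤ (b : ℝ) ^ (a (j + k)) :=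
      pow_le_pow_right₀ (by linarith) (by have := hak j; omega)
    calc (A : ℝ) / (b : ℝ) ^ (a (j + k)) ≤ (A : ℝ) / (b : ℝ) ^ (E + j) := by gcongr
      _ = _ := by rw [pow_add, inv_pow]; field_simp
  have hnn : ∀ j, 0 ≤ (A : ℝ) / (b : ℝ) ^ (a (j + k)) := fun j => by positivity
  have hs : Summable (fun j => (A : ℝ) / (b : ℝ) ^ (a (j + k))) :=
    Summable.of_nonneg_of_le hnn hle hg.summable
  have hs' : Summable (fun j => (A : ℝ) / (b : ℝ) ^ (a j)) :=
    (summable_nat_add_iff (f := fun j => (A : ℝ) / (b : ℝ) ^ (a j)) k).1 hs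
  have hsplit := hs'.sum_add_tsum_nat_add k
  rw [← hζ] at hsplit
  have hYr : (Y : ℝ) = (∑ j ∈ Finset.range k, (A : ℝ) / (b : ℝ) ^ (a j)) * (b : ℝ) ^ F := by
    rw [hY]
    push_cast
    rw [Finset.sum_mul]
    refine Finset.sum_congr rfl fun j hj => ?_
    have h := hF j (Finset.mem_range.1 hj)
    rw [pow_sub₀ _ hb0.ne' h]
    field_simp
  have ht0 : 0 ≤ ∑' j, (A : ℝ) / (b : ℝ) ^ (a (j + k)) := tsum_nonneg hnn
  have ht1 : ∑' j, (A : ℝ) / (b : ℝ) ^ (a (j + k)) ≤ (A : ℝ) / (b : ℝ) ^ E * (1 - (b : ℝ)⁻¹)⁻¹ := by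
    rw [← hg.tsum_eq]
    exact hs.tsum_le_tsum hle hg.summable
  have heq : ζ * (b : ℝ) ^ F - (Y : ℝ) = (∑' j, (A : ℝ) / (b : ℝ) ^ (a (j + k))) * (b : ℝ) ^ F := by
    rw [hYr, ← hsplit]; ring
  rw [heq, abs_of_nonneg (by positivity)]
  have h3 : (A : ℝ) * (1 - (b : ℝ)⁻¹)⁻¹ ≤ b := by
    have : (1 - (b : ℝ)⁻¹) = (b - 1) / b := by field_simp
    rw [this, inv_div, ← mul_div_assoc, div_le_iff₀ (by linarith)]
    nlinarith
  calc (∑' j, (A : ℝ) / (b : ℝ) ^ (a (j + k))) * (b : ℝ) ^ F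
      ≤ ((A : ℝ) / (b : ℝ) ^ E * (1 - (b : ℝ)⁻¹)⁻¹) * (b : ℝ) ^ F := by gcongr
    _ = (A * (1 - (b : ℝ)⁻¹)⁻¹) * ((b : ℝ) ^ F / (b : ℝ) ^ E) := by ring
    _ ≤ b * ((b : ℝ) ^ F / (b : ℝ) ^ E) := by gcongr
    _ = _ := by ring

lemma liminf_aux (u : ℕ → ℝ) (hu : ∀ n, 0 ≤ u n) (ω : ℝ) (hω : ω = Filter.liminf u atTop)
    (δ : ℝ) (hδ : 0 < δ) : ∀ᶠ n in atTop, ω - δ < u n := by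
  rw [Filter.liminf_eq] at hω
  have hne : {c | ∀ᶠ n in atTop, c ≤ u n}.Nonempty := ⟨0, Eventually.of_forall hu⟩
  obtain ⟨c, hc, hlt⟩ := exists_lt_of_lt_csSup hne (show ω - δ < _ by rw [← hω]; linarith)
  filter_upwards [hc] with n hn
  linarith

lemma growth_aux (e : ℕ → ℕ) (he0 : ∀ n, 0 < e n) (h : ∀ᶠ n in atTop, 2 * e n ≤ e (n + 1))
    (C η : ℝ) (hη : 0 < η) : ∀ᶠ n : ℕ in atTop, C * ((n : ℝ) + 1) ≤ η * e n := by
  obtain ⟨N, hN⟩ := eventually_atTop.1 h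
  have hg : ∀ k, 2 ^ k ≤ e (N + k) := by
    intro k
    induction k with
    | zero => simpa using Nat.succ_le_of_lt (he0 N)
    | succ k ih =>
      have := hN (N + k) (by omega)
      rw [pow_succ, ← add_assoc]; omega
  have hlim : Tendsto (fun n : ℕ => ((n : ℝ) ^ 1) / (2 : ℝ) ^ n) atTop (nhds 0) :=
    tendsto_pow_const_div_const_pow_of_one_lt 1 (by norm_num)
  have hlim0 : Tendsto (fun n : ℕ => ((n : ℝ) ^ 0) / (2 : ℝ) ^ n) atTop (nhds 0) :=
    tendsto_pow_const_div_const_pow_of_one_lt 0 (by norm_num)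
  have hl : Tendsto (fun n : ℕ => C * 2 ^ N * (((n : ℝ) ^ 1) / (2 : ℝ) ^ n + ((n : ℝ) ^ 0) / (2 : ℝ) ^ n))
      atTop (nhds 0) := by
    simpa using (hlim.add hlim0).const_mul (C * 2 ^ N)
  filter_upwards [hl.eventually (gt_mem_nhds hη), eventually_ge_atTop N] with n hn hnN
  obtain ⟨k, rfl⟩ := Nat.exists_eq_add_of_le hnN
  have h1 : (2 : ℝ) ^ k ≤ e (N + k) := by exact_mod_cast hg k
  have h2 : C * 2 ^ N * ((((N + k : ℕ) : ℝ) ^ 1) / (2 : ℝ) ^ (N + k) + (((N + k : ℕ) : ℝ) ^ 0) / (2 : ℝ) ^ (N + k))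
      = C * (((N + k : ℕ) : ℝ) + 1) / 2 ^ k := by
    rw [pow_add]; field_simp
  rw [h2, div_lt_iff₀ (by positivity)] at hn
  nlinarith

/-- Block-lacunary numbers `ζ = Σ A·b^{-aₙ}`: estimates for `‖ζ·b^{fₙ}‖` and structure of
all very good rational approximations of `ζ`. -/
theorem block_lacunary_approximations (b A : ℕ) (hb : 2 ≤ b) (hA1 : 1 ≤ A) (hAb : A < b)
    (e f : ℕ → ℕ) (he0 : 0 < e 0) (hemono : StrictMono e) (hfmono : StrictMono f)
    (hinter : ∀ n, e n < f n ∧ f n < e (n + 1))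
    (ω : ℝ) (hω : ω = Filter.liminf (fun n : ℕ => (e (n + 1) : ℝ) / (f n : ℝ)) atTop)
    (hω2 : 2 < ω)
    (hO : ∃ C : ℝ, ∀ n : ℕ, ((f n : ℝ) - (e n : ℝ)) ≤ C * ((n : ℝ) + 1))
    (a : ℕ → ℕ) (ha : StrictMono a)
    (haI : ∀ n, ∃ m, e m ≤ a n ∧ a n ≤ f m)
    (φ ψ : ℕ → ℕ) (hφ : StrictMono φ) (hψ : StrictMono ψ)
    (hφe : ∀ n, a (φ n) = e n) (hψf : ∀ n, a (ψ n) = f n)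
    (ζ : ℝ) (hζ : ζ = ∑' n : ℕ, (A : ℝ) / (b : ℝ) ^ (a n))
    (y : ℕ → ℤ) (hy : ∀ n, y n = ∑ j ∈ Finset.range (ψ n + 1), (A : ℤ) * (b : ℤ) ^ (f n - a j))
    (ε : ℝ) (hε : 0 < ε) :
    (∃ N : ℕ, ∀ n : ℕ, N ≤ n →
      distNearestInt (ζ * (b : ℝ) ^ (f n)) = |ζ * (b : ℝ) ^ (f n) - (y n : ℝ)| ∧
      |ζ * (b : ℝ) ^ (f n) - (y n : ℝ)| < ((b : ℝ) ^ (f n)) ^ (-ω + 1 + ε)) ∧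
    (∃ X : ℕ, ∀ (x : ℕ) (yy : ℤ), X ≤ x →
      |ζ * (x : ℝ) - (yy : ℝ)| ≤ (x : ℝ) ^ (-ω / (ω - 1) - ε) →
      ∃ n : ℕ, (x : ℤ) * y n - (b : ℤ) ^ (f n) * yy = 0) := by
  have hb2 : (2 : ℝ) ≤ b := by exact_mod_cast hb
  have hb0 : (0 : ℝ) < b := by linarith
  have hb1 : (1 : ℝ) < b := by linarith
  have hepos : ∀ n, 0 < e n := fun n => lt_of_lt_of_le he0 (hemono.monotone (Nat.zero_le n))
  have hfpos : ∀ n, 0 < f n := fun n => (hepos n).trans (hinter n).1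
  have htail : ∀ n, |ζ * (b : ℝ) ^ (f n) - (y n : ℝ)| ≤
      b * (b : ℝ) ^ (f n) / (b : ℝ) ^ (e (n + 1)) := by
    intro n
    refine tail_bound_aux b A hb hAb a ha (ψ n + 1) (f n) (e (n + 1)) ?_ ?_ ζ hζ (y n) (hy n)
    · intro j hj
      rw [← hψf n]
      exact ha.monotone (by omega)
    · obtain ⟨m, h1, h2⟩ := haI (ψ n + 1)
      have h3 : f n < a (ψ n + 1) := by rw [← hψf n]; exact ha (by omega)
      have h4 : n < m := hfmono.lt_iff_lt.1 (h3.trans_le h2)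
      exact (hemono.monotone h4).trans h1
  have hlim : ∀ δ : ℝ, 0 < δ → ∀ᶠ n in atTop, (ω - δ) * f n < e (n + 1) := by
    intro δ hδ
    filter_upwards [liminf_aux _ (fun n => by positivity) ω hω δ hδ] with n hn
    have : (0 : ℝ) < f n := by exact_mod_cast hfpos n
    exact (lt_div_iff₀ this).1 hn
  have hdouble : ∀ᶠ n in atTop, 2 * f n < e (n + 1) := by
    filter_upwards [hlim (ω - 2) (by linarith)] with n hn
    have : (2 : ℝ) * f n < e (n + 1) := by linarith
    exact_mod_cast this
  have hfn : ∀ n, n ≤ f n := fun n => hfmono.id_le n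
  constructor
  · rw [← eventually_atTop]
    obtain ⟨K, hK⟩ := exists_nat_gt (1 / (ε / 2))
    filter_upwards [hlim (ε / 2) (by linarith), hdouble, eventually_ge_atTop (K + 2)]
      with n hn hd hnK
    have ht := htail n
    have hfK : K + 2 ≤ f n := hnK.trans (hfn n)
    constructor
    · have h1 : (b : ℝ) ^ (f n + 3) ≤ b ^ (e (n + 1)) := pow_le_pow_right₀ hb1.le (by omega)
      have h2 : |ζ * (b : ℝ) ^ (f n) - (y n : ℝ)| < 1 / 2 := by
        refine ht.trans_lt ?_
        rw [div_lt_iff₀ (by positivity)]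
        have h3 : (b : ℝ) ^ (f n + 3) = b ^ 2 * (b * b ^ f n) := by ring
        have h4 : 0 < b * (b : ℝ) ^ f n := by positivity
        have h5 : (4 : ℝ) ≤ b ^ 2 := by nlinarith
        have h6 := mul_le_mul_of_nonneg_right h5 h4.le
        linarith
      have hr : round (ζ * (b : ℝ) ^ (f n)) = y n := by
        have := abs_lt.1 h2
        rw [round_eq, Int.floor_eq_iff]
        constructor <;> linarith
      unfold distNearestInt
      rw [hr]
    · refine ht.trans_lt ?_
      have hr : (b : ℝ) * (b : ℝ) ^ (f n) / (b : ℝ) ^ (e (n + 1)) =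
          (b : ℝ) ^ ((1 : ℝ) + f n - e (n + 1)) := by
        rw [Real.rpow_sub hb0, Real.rpow_add hb0, Real.rpow_one, Real.rpow_natCast, Real.rpow_natCast]
      rw [hr, ← Real.rpow_natCast, ← Real.rpow_mul hb0.le]
      apply Real.rpow_lt_rpow_of_exponent_lt hb1
      have hK' : (K : ℝ) + 2 ≤ f n := by exact_mod_cast hfK
      have : 1 < (f n : ℝ) * (ε / 2) := by
        rw [div_lt_iff₀ (by linarith)] at hK
        nlinarith
      nlinarith
  · by_contra hcon
    push Not at hcon
    obtain ⟨C, hC⟩ := hO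
    set κ := ω / (ω - 1) with hκ
    have hω1 : 0 < ω - 1 := by linarith
    have hκ0 : 0 < κ := by positivity
    have hcont : ContinuousAt (fun δ : ℝ => (1 + δ) * ((ω - δ) / (ω - δ - 1))) 0 := by
      have : (ω - 0 - 1) ≠ 0 := by simpa using hω1.ne'
      fun_prop (disch := assumption)
    have hev : ∀ᶠ δ : ℝ in nhdsWithin 0 (Ioi 0),
        (1 + δ) * ((ω - δ) / (ω - δ - 1)) < κ + ε / 2 := by
      apply (hcont.eventually_lt_const _).filter_mono nhdsWithin_le_nhds
      simp only [sub_zero, add_zero, one_mul, ← hκ]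
      linarith
    have hev2 : ∀ᶠ δ : ℝ in nhdsWithin 0 (Ioi 0), δ < ω - 2 :=
      (eventually_lt_nhds (by linarith)).filter_mono nhdsWithin_le_nhds
    obtain ⟨δ, ⟨hδ1, hδ2⟩, hδ0⟩ := ((hev.and hev2).and self_mem_nhdsWithin).exists
    replace hδ0 : 0 < δ := hδ0
    have hgrow := growth_aux e hepos (by
      filter_upwards [hdouble] with n hn
      have := (hinter n).1
      omega) C δ hδ0
    obtain ⟨N, hN⟩ := eventually_atTop.1 ((hlim δ hδ0).and (hdouble.and hgrow))
    obtain ⟨T, hT⟩ := exists_nat_gt ((1 + 2 * (κ + ε / 2)) / (ε / 2))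
    obtain ⟨x, yy, hxX, happ, hind⟩ := hcon (b ^ (e (N + 1) + T))
    have hex : ∃ n, 2 * b * x * b ^ f n < b ^ e (n + 1) := by
      refine ⟨max N (2 * b * x), ?_⟩
      obtain ⟨-, h2, -⟩ := hN (max N (2 * b * x)) (le_max_left _ _)
      have h3 := (le_max_right N (2 * b * x)).trans (hfn _)
      set n := max N (2 * b * x)
      calc 2 * b * x * b ^ f n < b ^ f n * b ^ f n := by
            apply Nat.mul_lt_mul_of_pos_right _ (by positivity)
            exact h3.trans_lt (Nat.lt_pow_self (by omega))
        _ = b ^ (2 * f n) := by ring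
        _ ≤ b ^ e (n + 1) := Nat.pow_le_pow_right (by omega) h2.le
    classical
    obtain ⟨n, hPn, hmin⟩ : ∃ n, (2 * b * x * b ^ f n < b ^ e (n + 1)) ∧
        ∀ m < n, ¬ (2 * b * x * b ^ f m < b ^ e (m + 1)) :=
      ⟨Nat.find hex, Nat.find_spec hex, fun m hm => Nat.find_min hex hm⟩
    have hbpos : 0 < b := by omega
    have hnN : N < n := by
      by_contra hle
      push Not at hle
      have h1 : b ^ e (n + 1) ≤ x := by
        refine le_trans (Nat.pow_le_pow_right hbpos ?_) hxX
        have := hemono.monotone (show n + 1 ≤ N + 1 by omega)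
        omega
      have h2 : x * 1 ≤ x * (2 * b * b ^ f n) := Nat.mul_le_mul_left _ (Nat.succ_le_of_lt (by positivity))
      have h3 : x * (2 * b * b ^ f n) = 2 * b * x * b ^ f n := by ring
      omega
    obtain ⟨m, rfl⟩ : ∃ m, n = m + 1 := ⟨n - 1, by omega⟩
    have hm := hmin m (by omega)
    push Not at hm
    obtain ⟨hl, hd, -⟩ := hN m (by omega)
    obtain ⟨-, -, hgr⟩ := hN (m + 1) (by omega)
    have hxpos : 0 < x := lt_of_lt_of_le (by positivity) hxX
    have hx0 : (0 : ℝ) < x := by exact_mod_cast hxpos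
    set t := Real.logb b x with ht
    have hxt : (b : ℝ) ^ t = x := Real.rpow_logb hb0 hb1.ne' hx0
    have htT : (T : ℝ) ≤ t := by
      rw [ht, Real.le_logb_iff_rpow_le hb1 hx0, Real.rpow_natCast]
      have : b ^ T ≤ x := le_trans (Nat.pow_le_pow_right hbpos (by omega)) hxX
      exact_mod_cast this
    -- upper bound for e (m+1)
    have hle1 : (e (m + 1) : ℝ) ≤ 2 + t + f m := by
      rw [← Real.rpow_le_rpow_left_iff hb1, Real.rpow_add hb0, Real.rpow_add hb0, hxt,
        Real.rpow_natCast, Real.rpow_natCast, Real.rpow_two]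
      have h1 : (b : ℝ) ^ e (m + 1) ≤ 2 * b * x * b ^ f m := by exact_mod_cast hm
      refine h1.trans ?_
      gcongr
      nlinarith
    -- lower bound for the approximation
    have hlow : 1 / (2 * (b : ℝ) ^ f (m + 1)) < |ζ * x - yy| := by
      have hne := hind (m + 1)
      have h1 : (1 : ℝ) ≤ |(x : ℝ) * y (m + 1) - (b : ℝ) ^ (f (m + 1)) * yy| := by
        exact_mod_cast Int.one_le_abs hne
      have h2 : (x : ℝ) * y (m + 1) - (b : ℝ) ^ (f (m + 1)) * yy =
          (b : ℝ) ^ (f (m + 1)) * (ζ * x - yy) - x * (ζ * (b : ℝ) ^ (f (m + 1)) - y (m + 1)) := by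
        ring
      have h3 := abs_sub ((b : ℝ) ^ (f (m + 1)) * (ζ * x - yy))
        (x * (ζ * (b : ℝ) ^ (f (m + 1)) - y (m + 1)))
      rw [← h2, abs_mul, abs_mul, abs_of_pos hx0,
        abs_of_pos (show (0 : ℝ) < (b : ℝ) ^ (f (m + 1)) by positivity)] at h3
      have h4 : (x : ℝ) * |ζ * (b : ℝ) ^ (f (m + 1)) - y (m + 1)| < 1 / 2 := by
        have h5 := htail (m + 1)
        have h6 : 2 * b * x * (b : ℝ) ^ f (m + 1) < b ^ e (m + 1 + 1) := by exact_mod_cast hPn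
        calc (x : ℝ) * |ζ * (b : ℝ) ^ (f (m + 1)) - y (m + 1)|
            ≤ x * (b * (b : ℝ) ^ (f (m + 1)) / (b : ℝ) ^ (e (m + 1 + 1))) := by gcongr
          _ = (x * b * (b : ℝ) ^ (f (m + 1))) / (b : ℝ) ^ (e (m + 1 + 1)) := by ring
          _ < 1 / 2 := by
            rw [div_lt_iff₀ (by positivity)]
            linarith
      rw [div_lt_iff₀ (by positivity)]
      linarith
    have hfin : t * (κ + ε) < f (m + 1) + 1 := by
      have h1 : (b : ℝ) ^ (-(1 + (f (m + 1) : ℝ))) ≤ 1 / (2 * (b : ℝ) ^ f (m + 1)) := by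
        rw [Real.rpow_neg hb0.le, Real.rpow_add hb0, Real.rpow_one, Real.rpow_natCast, ← one_div]
        gcongr
      have h2 := (h1.trans_lt hlow).trans_le happ
      have h3 : (x : ℝ) ^ (-ω / (ω - 1) - ε) = (b : ℝ) ^ (t * (-ω / (ω - 1) - ε)) := by
        rw [Real.rpow_mul hb0.le, hxt]
      rw [h3, Real.rpow_lt_rpow_left_iff hb1, neg_div, ← hκ] at h2
      linarith
    have hE : (e (m + 1) : ℝ) ≤ ((ω - δ) / (ω - δ - 1)) * (t + 2) := by
      rw [div_mul_eq_mul_div, le_div_iff₀ (by linarith)]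
      nlinarith
    have hf1 : (f (m + 1) : ℝ) ≤ (1 + δ) * e (m + 1) := by
      have := hC (m + 1)
      linarith
    have ht0 : (0 : ℝ) ≤ t := le_trans (by positivity) htT
    have h7 : (f (m + 1) : ℝ) ≤ (κ + ε / 2) * (t + 2) := by
      calc (f (m + 1) : ℝ) ≤ (1 + δ) * e (m + 1) := hf1
        _ ≤ (1 + δ) * (((ω - δ) / (ω - δ - 1)) * (t + 2)) := by gcongr
        _ = ((1 + δ) * ((ω - δ) / (ω - δ - 1))) * (t + 2) := by ring
        _ ≤ _ := by gcongr
    rw [div_lt_iff₀ (by linarith)] at hT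
    nlinarith
end

section
/- Let b ≥ 3, R ≥ 1 be integers, A ∈ {1, 2, …, b−1}, and let e, f be integers with R < e < f. Let a be a real number with A·b^R·(b^{−e} + b^{−f}) ≥ a/b and A·b^R·(b^{−e} + b^{−f}) < a. Let 𝓗 be the set of all numbers of the form χ_{e+1}·b^{−e−1} + χ_{e+2}·b^{−e−2} + ⋯ + χ_{f−1}·b^{−f+1} with each χ_l ∈ {0, A}. Then there exists κ ∈ 𝓗 such that (1/(b−1))·(b^{f−e+1} − 1)/(b^{f−e+1} + b) ≤ b^R·(κ + A·b^{−e} + A·b^{−f})/a < 1. -/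
open Finset

lemma geom_aux (b : ℝ) (hb : 3 ≤ b) (e n : ℕ) :
    (b - 1) * ∑ l ∈ Finset.Icc (e + 1) (e + n), b ^ (-(l : ℤ)) =
      b ^ (-(e : ℤ)) - b ^ (-((e + n : ℕ) : ℤ)) := by
  have hb0 : b ≠ 0 := by positivity
  induction n with
  | zero => simp
  | succ n ih =>
    rw [← add_assoc, Finset.sum_Icc_succ_top (by omega), mul_add, ih]
    have : b ^ (-((e + n : ℕ) : ℤ)) = b * b ^ (-((e + n + 1 : ℕ) : ℤ)) := by
      rw [← zpow_one_add₀ hb0]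
      congr 1
      push_cast
      ring
    rw [this]
    ring

/-- Digit-selection proposition: for `b ≥ 3`, `R ≥ 1`, a digit `A ∈ {1,…,b-1}`, integers
`R < e < f`, and a real `a` with `a/b ≤ A·b^R·(b^{-e} + b^{-f}) < a`, there is a choice
of digits `χ_l ∈ {0, A}` (for `e+1 ≤ l ≤ f-1`) such that, with
`κ = Σ_{l=e+1}^{f-1} χ_l·b^{-l}`,
`(1/(b-1))·(b^{f-e+1}-1)/(b^{f-e+1}+b) ≤ b^R·(κ + A·b^{-e} + A·b^{-f})/a < 1`. -/
theorem digit_selection (b R A : ℕ) (hb : 3 ≤ b) (hR : 1 ≤ R) (hA1 : 1 ≤ A) (hAb : A < b)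
    (e f : ℕ) (hRe : R < e) (hef : e < f) (a : ℝ)
    (h1 : a / (b : ℝ) ≤ (A : ℝ) * (b : ℝ) ^ R * ((b : ℝ) ^ (-(e : ℤ)) + (b : ℝ) ^ (-(f : ℤ))))
    (h2 : (A : ℝ) * (b : ℝ) ^ R * ((b : ℝ) ^ (-(e : ℤ)) + (b : ℝ) ^ (-(f : ℤ))) < a) :
    ∃ χ : ℕ → ℕ, (∀ l, χ l = 0 ∨ χ l = A) ∧
      1 / ((b : ℝ) - 1) * (((b : ℝ) ^ (f - e + 1) - 1) / ((b : ℝ) ^ (f - e + 1) + (b : ℝ))) ≤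
        (b : ℝ) ^ R * ((∑ l ∈ Finset.Icc (e + 1) (f - 1), (χ l : ℝ) * (b : ℝ) ^ (-(l : ℤ))) +
          (A : ℝ) * (b : ℝ) ^ (-(e : ℤ)) + (A : ℝ) * (b : ℝ) ^ (-(f : ℤ))) / a ∧
      (b : ℝ) ^ R * ((∑ l ∈ Finset.Icc (e + 1) (f - 1), (χ l : ℝ) * (b : ℝ) ^ (-(l : ℤ))) +
          (A : ℝ) * (b : ℝ) ^ (-(e : ℤ)) + (A : ℝ) * (b : ℝ) ^ (-(f : ℤ))) / a < 1 := by
  obtain ⟨n, rfl⟩ : ∃ n, f = e + n + 1 := ⟨f - e - 1, by omega⟩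
  have hB : (3 : ℝ) ≤ b := by exact_mod_cast hb
  have hA : (1 : ℝ) ≤ A := by exact_mod_cast hA1
  have hg := geom_aux b hB e n
  have hb0 : (b : ℝ) ≠ 0 := by positivity
  have hx : (b : ℝ) ^ (-((e + n : ℕ) : ℤ)) = b * (b : ℝ) ^ (-((e + n + 1 : ℕ) : ℤ)) := by
    rw [← zpow_one_add₀ hb0]
    congr 1
    push_cast
    ring
  have hu : (b : ℝ) ^ (-(e : ℤ)) = (b : ℝ) ^ (n + 1) * (b : ℝ) ^ (-((e + n + 1 : ℕ) : ℤ)) := by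
    rw [← zpow_natCast, ← zpow_add₀ hb0]
    congr 1
    push_cast
    ring
  have hq : (b : ℝ) ^ (e + n + 1 - e + 1) = b * (b : ℝ) ^ (n + 1) := by
    rw [← pow_succ']
    congr 1
    omega
  have hv : 0 < (b : ℝ) ^ (-((e + n + 1 : ℕ) : ℤ)) := by positivity
  have hq1 : 1 ≤ (b : ℝ) ^ (n + 1) := one_le_pow₀ (by linarith)
  have hP : 0 < (b : ℝ) ^ R := by positivity
  have hs : e + n + 1 - 1 = e + n := by omega
  rw [hx] at hg
  rw [hq, hs]
  rw [hu] at h1 h2 hg ⊢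
  generalize (b : ℝ) ^ (-((e + n + 1 : ℕ) : ℤ)) = v at *
  generalize (b : ℝ) ^ (n + 1) = q at *
  generalize (b : ℝ) ^ R = P at *
  have hbq : 3 ≤ b * q := by nlinarith
  obtain ⟨W, hW⟩ : ∃ W, W = P * A * v := ⟨_, rfl⟩
  have hW0 : 0 < W := by rw [hW]; positivity
  have h1' : a ≤ b * W * (q + 1) := by
    rw [div_le_iff₀ (by positivity)] at h1
    rw [hW]; linarith
  have h2' : W * (q + 1) < a := by rw [hW]; linarith
  have ha : 0 < a := lt_trans (by positivity) h2'
  have hb1 : 0 < (b : ℝ) - 1 := by linarith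
  have hL : 1 / ((b : ℝ) - 1) * ((b * q - 1) / (b * q + b)) =
      (b * q - 1) / ((b - 1) * (b * (q + 1))) := by
    field_simp
  have hd : 0 < ((b : ℝ) - 1) * (b * (q + 1)) := by positivity
  rw [hL]
  by_cases hc : W * (b * q - 1) / (b - 1) < a
  · refine ⟨fun _ => A, fun _ => Or.inr rfl, ?_⟩
    have hval : P * ((∑ l ∈ Finset.Icc (e + 1) (e + n), (A : ℝ) * (b : ℝ) ^ (-(l : ℤ))) +
        A * (q * v) + A * v) = W * (b * q - 1) / (b - 1) := by
      rw [← Finset.mul_sum, eq_div_iff hb1.ne', hW]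
      linear_combination (P * A) * hg
    rw [hval]
    refine ⟨?_, by rwa [div_lt_one ha]⟩
    rw [div_div, div_le_div_iff₀ hd (by positivity)]
    have : 0 ≤ (b * q - 1) * ((b : ℝ) - 1) := mul_nonneg (by linarith) hb1.le
    nlinarith [mul_le_mul_of_nonneg_left h1' this]
  · refine ⟨fun _ => 0, fun _ => Or.inl rfl, ?_⟩
    have hval : P * ((∑ l ∈ Finset.Icc (e + 1) (e + n), ((0 : ℕ) : ℝ) * (b : ℝ) ^ (-(l : ℤ))) +
        A * (q * v) + A * v) = W * (q + 1) := by
      simp only [Nat.cast_zero, zero_mul, Finset.sum_const_zero]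
      rw [hW]; ring
    rw [hval]
    refine ⟨?_, by rwa [div_lt_one ha]⟩
    rw [not_lt, le_div_iff₀ hb1] at hc
    rw [div_le_div_iff₀ hd ha]
    have k1 : (b * q - 1) * (a * (b - 1)) ≤ (b * q - 1) * (W * (b * q - 1)) :=
      mul_le_mul_of_nonneg_left hc (by linarith)
    have k2 : (b * q - 1) * (b * q - 1) ≤ ((b : ℝ) * (q + 1)) * (b * (q + 1)) :=
      mul_le_mul (by linarith) (by linarith) (by linarith) (by positivity)
    have k3 : (b : ℝ) ≤ (b - 1) ^ 2 := by nlinarith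
    have k4 : (b : ℝ) * (b * (q + 1) ^ 2) ≤ (b - 1) ^ 2 * (b * (q + 1) ^ 2) :=
      mul_le_mul_of_nonneg_right k3 (by positivity)
    have k5 : W * ((b * q - 1) * (b * q - 1)) ≤ W * ((b - 1) ^ 2 * (b * (q + 1) ^ 2)) :=
      mul_le_mul_of_nonneg_left (by linarith) hW0.le
    refine le_of_mul_le_mul_right ?_ hb1
    linarith
end
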